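/- For every μ ∈ M_f^∞ and every ε > 0, the finite measure μ_ε defined by μ_ε(E) = μ(E ∩ W_ε) for Borel E ⊆ W satisfies OT_∞(μ, μ_ε) ≤ ε. Consequently, the set M_fin^∞ of finite measures in M^∞ is dense in (M_f^∞, OT_∞), and M_f^∞ is the Cauchy completion of (M_fin^∞, OT_∞). -/

import Mathlib

/-! Common setup: the birth-death plane, Radon measures, partial optimal transport. -/

noncomputable section

open MeasureTheory Topology Filter Set
open scoped ENNReal

/-- The ambient plane `ℝ²` (with the sup-norm, i.e. `q = ∞`). -/
abbrev P2 : Type := ℝ × ℝ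

/-- The birth-death plane `W = {(b,d) : b < d}`. -/
def Wbd : Set P2 := {p | p.1 < p.2}

/-- The closure `W̄` of the birth-death plane. -/
def Wcl : Set P2 := closure Wbd

/-- The diagonal `Δ`. -/
def Diag : Set P2 := {p | p.1 = p.2}

/-- Distance from a point to the diagonal, `‖x - Δ‖`. -/
def distDiag (x : P2) : ℝ := Metric.infDist x Diag

/-- The pseudometric `d(x,y) = min(‖x-y‖, ‖x-Δ‖ + ‖y-Δ‖)` on `W̄`. -/
def dW (x y : P2) : ℝ := min (dist x y) (distDiag x + distDiag y)

/-- The support of a Borel measure: points all of whose neighborhoods have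
positive measure. -/
def msupport {α : Type*} [TopologicalSpace α] [MeasurableSpace α] (μ : Measure α) : Set α :=
  {x | ∀ U ∈ 𝓝 x, 0 < μ U}

/-- `μ` is a Radon measure on the subspace `S`: it vanishes off `S`, is inner regular
(on relatively open sets) by compact sets, outer regular (by relatively open sets), and finite
on compact subsets of `S`. -/
def RadonOn {α : Type*} [TopologicalSpace α] [MeasurableSpace α] (S : Set α)
    (μ : Measure α) : Prop :=
  μ Sᶜ = 0 ∧
  (∀ U : Set α, IsOpen U → μ (U ∩ S) = ⨆ (K : Set α) (_ : K ⊆ U ∩ S) (_ : IsCompact K), μ K) ∧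
  (∀ E : Set α, E ⊆ S → MeasurableSet E →
    μ E = ⨅ (U : Set α) (_ : IsOpen U) (_ : E ⊆ U), μ (U ∩ S)) ∧
  (∀ K : Set α, K ⊆ S → IsCompact K → μ K < ⊤)

/-- The set `M` of Radon measures on `W`. -/
def MRadon : Set (Measure P2) := {μ | RadonOn Wbd μ}

/-- `pers_∞(μ) = sup{‖x-Δ‖ : x ∈ spt μ}` (valued in `ℝ≥0∞`). -/
def persInf (μ : Measure P2) : ℝ≥0∞ := ⨆ x ∈ msupport μ, ENNReal.ofReal (distDiag x)

/-- The space `M^∞` of Radon measures on `W` with finite `∞`-persistence. -/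
def MInf : Set (Measure P2) := {μ | RadonOn Wbd μ ∧ persInf μ < ⊤}

/-- A coupling (admissible transport plan) between `μ` and `ν`: a Radon measure on
`W̄ × W̄` whose marginals restricted to Borel subsets of `W` are `μ` and `ν`. -/
def IsCoupling (π : Measure (P2 × P2)) (μ ν : Measure P2) : Prop :=
  RadonOn (Wcl ×ˢ Wcl) π ∧
  (∀ A : Set P2, A ⊆ Wbd → MeasurableSet A → π (A ×ˢ Wcl) = μ A) ∧
  (∀ B : Set P2, B ⊆ Wbd → MeasurableSet B → π (Wcl ×ˢ B) = ν B)

/-- The `∞`-cost of a transport plan: `sup {d(x,y) : (x,y) ∈ spt π}`. -/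
def costInf (π : Measure (P2 × P2)) : ℝ≥0∞ :=
  ⨆ p ∈ msupport π, ENNReal.ofReal (dW p.1 p.2)

/-- The partial `∞`-optimal transport distance. -/
def OT (μ ν : Measure P2) : ℝ≥0∞ :=
  ⨅ (π : Measure (P2 × P2)) (_ : IsCoupling π μ ν), costInf π

/-- `W_ε = {(x,y) : y - x > ε}`. -/
def Weps (ε : ℝ) : Set P2 := {p | p.2 - p.1 > ε}

/-- The space `M_f^∞` of off-diagonally finite measures. -/
def Mf : Set (Measure P2) := {μ | μ ∈ MInf ∧ ∀ ε : ℝ, 0 < ε → μ (Weps ε) < ⊤}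

/-- The space `M_fin^∞` of finite measures in `M^∞`. -/
def Mfin : Set (Measure P2) := {μ | μ ∈ MInf ∧ μ Wbd < ⊤}

/-- `f ∈ C_c(W)`: a continuous function, compactly supported, with support contained
in the open set `W` (extended by zero to the plane). -/
def IsCcW (f : P2 → ℝ) : Prop :=
  Continuous f ∧ HasCompactSupport f ∧ tsupport f ⊆ Wbd

/-- Convergence of a sequence of measures to `μ` in the distance `OT_∞`. -/
def OTConv (u : ℕ → Measure P2) (μ : Measure P2) : Prop :=
  Tendsto (fun n => OT (u n) μ) atTop (𝓝 0)

open scoped CompactlySupported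

section Vague

variable {X : Type*} [MetricSpace X]

lemma exists_cc_one_on_compact_tsupport_subset [LocallyCompactSpace X] {K O : Set X}
    (hK : IsCompact K) (hO : IsOpen O) (hKO : K ⊆ O) :
    ∃ f : C_c(X, ℝ), (∀ x, 0 ≤ f x) ∧ (∀ x, f x ≤ 1) ∧ (∀ x ∈ K, f x = 1) ∧ tsupport f ⊆ O := by
  obtain ⟨k, -, hkc, hKk, hkO⟩ := exists_compact_closed_between hK hO hKO
  obtain ⟨f, hf1, hf0, hfc, hf⟩ := exists_continuous_one_zero_of_isCompact hK
    isOpen_interior.isClosed_compl (disjoint_compl_right_iff_subset.mpr hKk)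
  refine ⟨⟨f, hfc⟩, fun x => (hf x).1, fun x => (hf x).2, fun x hx => hf1 hx, ?_⟩
  refine (closure_minimal (fun x hx => ?_) hkc).trans hkO
  by_contra h
  exact hx (hf0 fun h' => h (interior_subset h'))

variable [MeasurableSpace X]

/-- Vague convergence: convergence of integrals of compactly supported continuous functions. -/
def VagueTendsto (s : ℕ → Measure X) (l : Filter ℕ) (m : Measure X) : Prop :=
  ∀ f : C_c(X, ℝ), Tendsto (fun n => ∫ x, f x ∂(s n)) l (𝓝 (∫ x, f x ∂m))

variable [BorelSpace X]

lemma integrable_cc (m : Measure X) [IsFiniteMeasureOnCompacts m] (f : C_c(X, ℝ)) :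
    Integrable f m :=
  f.continuous.integrable_of_hasCompactSupport f.hasCompactSupport

lemma measure_compact_le_integral (m : Measure X) [IsFiniteMeasureOnCompacts m] {K : Set X}
    (hK : IsCompact K) (f : C_c(X, ℝ)) (h0 : ∀ x, 0 ≤ f x) (h1 : ∀ x ∈ K, f x = 1) :
    m K ≤ ENNReal.ofReal (∫ x, f x ∂m) := by
  rw [ofReal_integral_eq_lintegral_ofReal (integrable_cc m f) (Eventually.of_forall h0),
    ← lintegral_indicator_one hK.measurableSet]
  refine lintegral_mono fun x => ?_
  by_cases hx : x ∈ K
  · simp [hx, h1 x hx]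
  · simp [hx]

lemma integral_le_measure_of_tsupport_subset (m : Measure X) [IsFiniteMeasureOnCompacts m]
    {O : Set X} (hO : IsOpen O) (f : C_c(X, ℝ)) (h0 : ∀ x, 0 ≤ f x) (h1 : ∀ x, f x ≤ 1)
    (hf : tsupport f ⊆ O) : ENNReal.ofReal (∫ x, f x ∂m) ≤ m O := by
  rw [ofReal_integral_eq_lintegral_ofReal (integrable_cc m f) (Eventually.of_forall h0),
    ← lintegral_indicator_one hO.measurableSet]
  refine lintegral_mono fun x => ?_
  by_cases hx : x ∈ O
  · simpa [hx] using h1 x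
  · simp [hx, image_eq_zero_of_notMem_tsupport fun h => hx (hf h)]

variable [LocallyCompactSpace X]

/-- Along an ultrafilter, a sequence of measures that is bounded on compact sets converges
vaguely. -/
lemma exists_vagueTendsto (l : Ultrafilter ℕ) (s : ℕ → Measure X)
    [∀ n, IsFiniteMeasureOnCompacts (s n)]
    (hs : ∀ K : Set X, IsCompact K → ∃ C : ℝ≥0∞, C < ⊤ ∧ ∀ᶠ n in (l : Filter ℕ), s n K ≤ C) :
    ∃ m : Measure X, IsFiniteMeasureOnCompacts m ∧ VagueTendsto s l m := by
  have key : ∀ f : C_c(X, ℝ), ∃ a : ℝ, Tendsto (fun n => ∫ x, f x ∂(s n)) l (𝓝 a) := by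
    intro f
    obtain ⟨C, hC, hev⟩ := hs _ f.hasCompactSupport
    obtain ⟨B, hB⟩ := f.continuous.bounded_above_of_compact_support f.hasCompactSupport
    have hmem : ∀ᶠ n in (l : Filter ℕ),
        (∫ x, f x ∂(s n)) ∈ Metric.closedBall (0 : ℝ) (|B| * C.toReal) := by
      filter_upwards [hev] with n hn
      rw [mem_closedBall_zero_iff]
      have h1 : ∫ x, f x ∂(s n) = ∫ x in tsupport f, f x ∂(s n) :=
        (setIntegral_eq_integral_of_forall_compl_eq_zero
          fun x hx => image_eq_zero_of_notMem_tsupport hx).symm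
      rw [h1]
      refine (norm_setIntegral_le_of_norm_le_const (hn.trans_lt hC) fun x _ =>
        (hB x).trans (le_abs_self B)).trans ?_
      exact mul_le_mul_of_nonneg_left (ENNReal.toReal_mono hC.ne hn) (abs_nonneg B)
    obtain ⟨a, -, ha⟩ := (isCompact_closedBall (0 : ℝ) (|B| * C.toReal)).ultrafilter_le_nhds
      (l.map fun n => ∫ x, f x ∂(s n)) (le_principal_iff.2 hmem)
    exact ⟨a, ha⟩
  choose L hL using key
  let Λ : C_c(X, ℝ) →ₚ[ℝ] ℝ := PositiveLinearMap.mk₀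
    { toFun := L
      map_add' := fun f g => by
        refine tendsto_nhds_unique (hL (f + g)) (((hL f).add (hL g)).congr fun n => ?_)
        exact (integral_add (integrable_cc (s n) f) (integrable_cc (s n) g)).symm
      map_smul' := fun c f => by
        refine tendsto_nhds_unique (hL (c • f)) (((hL f).const_mul c).congr fun n => ?_)
        exact (integral_const_mul c _).symm }
    fun f hf => ge_of_tendsto (hL f) (Eventually.of_forall fun n => integral_nonneg fun x => hf x)
  refine ⟨RealRMK.rieszMeasure Λ, inferInstance, fun f => ?_⟩
  rw [RealRMK.integral_rieszMeasure Λ f]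
  exact hL f

variable [SecondCountableTopology X]

lemma VagueTendsto.measure_open_le {s : ℕ → Measure X} {l : Filter ℕ} [l.NeBot] {m : Measure X}
    [∀ n, IsFiniteMeasureOnCompacts (s n)] [IsFiniteMeasureOnCompacts m]
    (h : VagueTendsto s l m) {O : Set X} (hO : IsOpen O) {c : ℝ≥0∞}
    (hc : ∀ᶠ n in l, s n O ≤ c) : m O ≤ c := by
  rw [hO.measure_eq_iSup_isCompact]
  refine iSup₂_le fun K hKO => iSup_le fun hK => ?_
  obtain ⟨f, h0, h1, hfK, hfO⟩ := exists_cc_one_on_compact_tsupport_subset hK hO hKO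
  refine (measure_compact_le_integral m hK f h0 hfK).trans ?_
  refine le_of_tendsto (ENNReal.continuous_ofReal.continuousAt.tendsto.comp (h f)) ?_
  filter_upwards [hc] with n hn
  exact (integral_le_measure_of_tsupport_subset (s n) hO f h0 h1 hfO).trans hn

/-- Comparison of measures on an open set by means of compactly supported test functions. -/
lemma measure_le_of_integral_le {m₁ m₂ : Measure X} [IsFiniteMeasureOnCompacts m₁]
    [IsFiniteMeasureOnCompacts m₂] {O : Set X} (hO : IsOpen O)
    (h : ∀ f : C_c(X, ℝ), (∀ x, 0 ≤ f x) → tsupport f ⊆ O → ∫ x, f x ∂m₁ ≤ ∫ x, f x ∂m₂)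
    {A : Set X} (hA : MeasurableSet A) (hAO : A ⊆ O) : m₁ A ≤ m₂ A := by
  rw [hA.measure_eq_iSup_isCompact]
  refine iSup₂_le fun K hKA => iSup_le fun hK => (?_ : m₁ K ≤ m₂ K).trans (measure_mono hKA)
  rw [K.measure_eq_iInf_isOpen m₂]
  refine le_iInf₂ fun V hKV => le_iInf fun hV => ?_
  obtain ⟨f, h0, h1, hfK, hfV⟩ := exists_cc_one_on_compact_tsupport_subset hK (hV.inter hO)
    (subset_inter hKV (hKA.trans hAO))
  calc m₁ K ≤ ENNReal.ofReal (∫ x, f x ∂m₁) := measure_compact_le_integral m₁ hK f h0 hfK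
    _ ≤ ENNReal.ofReal (∫ x, f x ∂m₂) :=
      ENNReal.ofReal_le_ofReal (h f h0 (hfV.trans inter_subset_right))
    _ ≤ m₂ (V ∩ O) := integral_le_measure_of_tsupport_subset m₂ (hV.inter hO) f h0 h1 hfV
    _ ≤ m₂ V := measure_mono inter_subset_left

end Vague

section Plane

lemma distDiag_eq (x : P2) : distDiag x = |x.2 - x.1| / 2 := by
  have hne : Diag.Nonempty := ⟨(0, 0), rfl⟩
  apply le_antisymm
  · have hm : (((x.1 + x.2) / 2, (x.1 + x.2) / 2) : P2) ∈ Diag := rfl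
    refine (Metric.infDist_le_dist_of_mem hm).trans ?_
    rw [Prod.dist_eq, Real.dist_eq, Real.dist_eq]
    apply max_le <;> apply le_of_eq
    · rw [show x.1 - (x.1 + x.2) / 2 = -((x.2 - x.1) / 2) by ring, abs_neg, abs_div]; simp
    · rw [show x.2 - (x.1 + x.2) / 2 = (x.2 - x.1) / 2 by ring, abs_div]; simp
  · refine (Metric.le_infDist hne).2 fun y hy => ?_
    have hy' : y.1 = y.2 := hy
    rw [Prod.dist_eq, Real.dist_eq, Real.dist_eq]
    have h1 := le_max_left |x.1 - y.1| |x.2 - y.2|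
    have h2 := le_max_right |x.1 - y.1| |x.2 - y.2|
    have h3 := abs_sub (x.2 - y.2) (x.1 - y.1)
    rw [show x.2 - y.2 - (x.1 - y.1) = x.2 - x.1 by rw [hy']; ring] at h3
    linarith

lemma isOpen_Weps (ε : ℝ) : IsOpen (Weps ε) :=
  isOpen_lt continuous_const (continuous_snd.sub continuous_fst)

lemma isOpen_Wbd : IsOpen Wbd := isOpen_lt continuous_fst continuous_snd

lemma Wcl_eq : Wcl = {p : P2 | p.1 ≤ p.2} := by
  apply subset_antisymm
  · exact closure_minimal (fun p hp => show p.1 ≤ p.2 from le_of_lt hp) (isClosed_le continuous_fst continuous_snd)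
  · intro p hp
    have hp' : p.1 ≤ p.2 := hp
    have h : Tendsto (fun t : ℝ => ((p.1, p.2 + t) : P2)) (𝓝[>] 0) (𝓝 p) := by
      have hc : Continuous fun t : ℝ => ((p.1, p.2 + t) : P2) := by fun_prop
      have := hc.tendsto 0
      simp only [add_zero] at this
      exact this.mono_left nhdsWithin_le_nhds
    refine mem_closure_of_tendsto h (eventually_mem_nhdsWithin.mono fun t ht => ?_)
    have : (0 : ℝ) < t := ht
    show p.1 < p.2 + t
    linarith

lemma continuous_dW : Continuous fun p : P2 × P2 => dW p.1 p.2 := by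
  unfold dW distDiag
  have h := Metric.continuous_infDist_pt Diag
  exact continuous_dist.min ((h.comp continuous_fst).add (h.comp continuous_snd))

lemma height_le_add_dist (x y : P2) : x.2 - x.1 ≤ y.2 - y.1 + 2 * dist x y := by
  have h1 : |x.1 - y.1| ≤ dist x y := by rw [Prod.dist_eq]; exact le_max_left _ _
  have h2 : |x.2 - y.2| ≤ dist x y := by rw [Prod.dist_eq]; exact le_max_right _ _
  linarith [neg_abs_le (x.1 - y.1), le_abs_self (x.2 - y.2)]

end Plane

section Radon

lemma msupport_eq_support {α : Type*} [TopologicalSpace α] [MeasurableSpace α] (μ : Measure α) :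
    msupport μ = μ.support :=
  Set.ext fun x => (Measure.mem_support_iff_forall x).symm

/-- The pushforward to the ambient space of a measure on a locally compact subspace that is finite
on compact sets is Radon on that subspace. -/
lemma radonOn_map_val {α : Type*} [MetricSpace α] [SecondCountableTopology α] [MeasurableSpace α]
    [BorelSpace α] {S : Set α} (hS : MeasurableSet S) [LocallyCompactSpace S] (m : Measure S)
    [IsFiniteMeasureOnCompacts m] : RadonOn S (m.map Subtype.val) := by
  have emb : MeasurableEmbedding (Subtype.val : S → α) := MeasurableEmbedding.subtype_coe hS
  have hmap : ∀ E : Set α, m.map Subtype.val E = m (Subtype.val ⁻¹' E) := emb.map_apply m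
  refine ⟨by rw [hmap]; simp, fun U hU => ?_, fun E hES hE => ?_, fun K hKS hK => ?_⟩
  · apply le_antisymm
    · rw [hmap, preimage_inter, Subtype.coe_preimage_self, inter_univ,
        (hU.preimage continuous_subtype_val).measure_eq_iSup_isCompact]
      refine iSup₂_le fun K hKU => iSup_le fun hK => ?_
      refine le_trans ?_ (le_iSup₂_of_le (Subtype.val '' K) ?_
        (le_iSup_of_le (hK.image continuous_subtype_val) le_rfl))
      · rw [hmap, preimage_image_eq _ Subtype.val_injective]
      · rintro _ ⟨x, hx, rfl⟩
        exact ⟨hKU hx, x.2⟩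
    · exact iSup₂_le fun K hK => iSup_le fun _ => measure_mono hK
  · apply le_antisymm
    · exact le_iInf₂ fun U _ => le_iInf fun hEU => measure_mono (subset_inter hEU hES)
    · rw [hmap, (Subtype.val ⁻¹' E).measure_eq_iInf_isOpen m]
      refine le_iInf₂ fun V hEV => le_iInf fun hV => ?_
      obtain ⟨U, hU, rfl⟩ := isOpen_induced_iff.1 hV
      refine iInf₂_le_of_le U hU (iInf_le_of_le (fun x hx => ?_) ?_)
      · exact hEV (show (⟨x, hES hx⟩ : S) ∈ Subtype.val ⁻¹' E from hx)
      · rw [hmap]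
        exact measure_mono (preimage_mono inter_subset_left)
  · rw [hmap]
    refine IsCompact.measure_lt_top ?_
    exact Topology.IsInducing.subtypeVal.isCompact_preimage_iff (by simpa using hKS) |>.2 hK

lemma radonOn_of_isClosed {α : Type*} [MetricSpace α] [SecondCountableTopology α]
    [LocallyCompactSpace α] [MeasurableSpace α] [BorelSpace α] {S : Set α} (hS : IsClosed S)
    (m : Measure α) (hm : m Sᶜ = 0) (hK : ∀ K : Set α, IsCompact K → m K < ⊤) : RadonOn S m := by
  have : LocallyCompactSpace S := hS.isClosedEmbedding_subtypeVal.locallyCompactSpace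
  have emb : MeasurableEmbedding (Subtype.val : S → α) :=
    MeasurableEmbedding.subtype_coe hS.measurableSet
  have : IsFiniteMeasureOnCompacts (m.comap (Subtype.val : S → α)) := ⟨fun K h => by
    rw [emb.comap_apply]
    exact hK _ (h.image continuous_subtype_val)⟩
  have h := radonOn_map_val hS.measurableSet (m.comap (Subtype.val : S → α))
  rwa [emb.map_comap, Subtype.range_coe, Measure.restrict_eq_self_of_ae_mem] at h
  exact mem_ae_iff.2 hm

end Radon

/-- Points of the birth-death plane at vertical distance more than `ε` from the diagonal. -/
def farDiag (ε : ℝ) : Set Wbd := Subtype.val ⁻¹' Weps ε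

section FarDiag

instance : LocallyCompactSpace Wbd := isOpen_Wbd.locallyCompactSpace

lemma isOpen_farDiag (ε : ℝ) : IsOpen (farDiag ε) :=
  (isOpen_Weps ε).preimage continuous_subtype_val

lemma measurableEmbedding_val : MeasurableEmbedding (Subtype.val : Wbd → P2) :=
  MeasurableEmbedding.subtype_coe isOpen_Wbd.measurableSet

lemma farDiag_anti {a b : ℝ} (h : a ≤ b) : farDiag b ⊆ farDiag a :=
  fun _ hx => lt_of_le_of_lt h hx

lemma exists_subset_farDiag {K : Set Wbd} (hK : IsCompact K) :
    ∃ ε : ℝ, 0 < ε ∧ K ⊆ farDiag ε := by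
  rcases K.eq_empty_or_nonempty with rfl | hne
  · exact ⟨1, one_pos, empty_subset _⟩
  have hc : Continuous fun x : Wbd => x.1.2 - x.1.1 := by fun_prop
  obtain ⟨x, -, hx⟩ := hK.exists_isMinOn hne hc.continuousOn
  have hx0 : 0 < x.1.2 - x.1.1 := sub_pos.2 x.2
  refine ⟨(x.1.2 - x.1.1) / 2, half_pos hx0, fun y hy => ?_⟩
  have : x.1.2 - x.1.1 ≤ y.1.2 - y.1.1 := hx hy
  show y.1.2 - y.1.1 > _
  linarith

lemma isFiniteMeasureOnCompacts_of_farDiag {m : Measure Wbd}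
    (h : ∀ ε : ℝ, 0 < ε → m (farDiag ε) < ⊤) : IsFiniteMeasureOnCompacts m := ⟨fun K hK => by
  obtain ⟨ε, hε, hKε⟩ := exists_subset_farDiag hK
  exact (measure_mono hKε).trans_lt (h ε hε)⟩

lemma persInf_map_val_lt_top {m : Measure Wbd} {R : ℝ} (hR : m (farDiag R) = 0) :
    persInf (m.map Subtype.val) < ⊤ := by
  refine lt_of_le_of_lt (iSup₂_le fun x hx => ?_) (ENNReal.ofReal_lt_top (r := |R| / 2))
  have hmap : ∀ E : Set P2, m.map Subtype.val E = m (Subtype.val ⁻¹' E) :=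
    measurableEmbedding_val.map_apply m
  have hx1 : x ∈ Wcl := by
    by_contra hx1
    have h0 := hx Wclᶜ (isClosed_closure.isOpen_compl.mem_nhds hx1)
    rw [hmap] at h0
    refine h0.ne' (measure_mono_null (fun y hy => ?_) (measure_empty (μ := m)))
    exact hy (subset_closure y.2)
  have hx2 : ¬ x.2 - x.1 > R := fun hx2 => by
    have h0 := hx (Weps R) ((isOpen_Weps R).mem_nhds hx2)
    rw [hmap] at h0
    exact h0.ne' hR
  rw [Wcl_eq] at hx1
  have hx3 : x.1 ≤ x.2 := hx1
  apply ENNReal.ofReal_le_ofReal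
  rw [distDiag_eq, abs_of_nonneg (sub_nonneg.2 hx3)]
  linarith [le_abs_self R]

lemma map_val_mem_Mf {m : Measure Wbd} (h : ∀ ε : ℝ, 0 < ε → m (farDiag ε) < ⊤)
    {R : ℝ} (hR : m (farDiag R) = 0) : m.map Subtype.val ∈ Mf := by
  have := isFiniteMeasureOnCompacts_of_farDiag h
  refine ⟨⟨radonOn_map_val isOpen_Wbd.measurableSet m, persInf_map_val_lt_top hR⟩,
    fun ε hε => ?_⟩
  rw [measurableEmbedding_val.map_apply]
  exact h ε hε

lemma exists_eq_map_val {μ : Measure P2} (hμ : μ ∈ Mf) :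
    ∃ m : Measure Wbd, m.map Subtype.val = μ ∧ (∀ ε : ℝ, 0 < ε → m (farDiag ε) < ⊤) ∧
      ∃ R : ℝ, m (farDiag R) = 0 := by
  obtain ⟨⟨hrad, hpers⟩, hfin⟩ := hμ
  have heq : (μ.comap (Subtype.val : Wbd → P2)).map Subtype.val = μ := by
    rw [measurableEmbedding_val.map_comap, Subtype.range_coe, Measure.restrict_eq_self_of_ae_mem]
    exact mem_ae_iff.2 hrad.1
  have happ : ∀ ε, μ.comap (Subtype.val : Wbd → P2) (farDiag ε) = μ (Weps ε) := fun ε => by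
    conv_rhs => rw [← heq, measurableEmbedding_val.map_apply]
    rfl
  refine ⟨_, heq, fun ε hε => by rw [happ]; exact hfin ε hε, 2 * (persInf μ).toReal, ?_⟩
  rw [happ]
  refine measure_mono_null (t := μ.supportᶜ) (fun x hx => mem_compl fun hxs => ?_)
    Measure.measure_compl_support
  rw [← msupport_eq_support] at hxs
  have h1 : ENNReal.ofReal (distDiag x) ≤ persInf μ :=
    le_iSup₂_of_le (f := fun x (_ : x ∈ msupport μ) => ENNReal.ofReal (distDiag x)) x hxs le_rfl
  rw [ENNReal.ofReal_le_iff_le_toReal hpers.ne, distDiag_eq] at h1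
  have h2 : x.2 - x.1 > 2 * (persInf μ).toReal := hx
  linarith [le_abs_self (x.2 - x.1)]

end FarDiag

/-- A partial matching between `μ` and `ν` moving points by at most `δ`: only mass at distance at
most `δ` from the diagonal may remain unmatched. -/
structure IsPartialMatching (δ : ℝ) (σ : Measure (Wbd × Wbd)) (μ ν : Measure Wbd) : Prop where
  fst_le : σ.map Prod.fst ≤ μ
  snd_le : σ.map Prod.snd ≤ ν
  fst_ge : ∀ A, MeasurableSet A → A ⊆ farDiag (2 * δ) → μ A ≤ σ.map Prod.fst A
  snd_ge : ∀ A, MeasurableSet A → A ⊆ farDiag (2 * δ) → ν A ≤ σ.map Prod.snd A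
  near : ∀ᵐ p ∂σ, dist p.1 p.2 ≤ δ

namespace IsPartialMatching

variable {δ : ℝ} {σ : Measure (Wbd × Wbd)} {μ ν : Measure Wbd}

lemma swap (h : IsPartialMatching δ σ μ ν) : IsPartialMatching δ (σ.map Prod.swap) ν μ := by
  have h1 : (σ.map Prod.swap).map Prod.fst = σ.map Prod.snd := by
    rw [Measure.map_map measurable_fst measurable_swap]; rfl
  have h2 : (σ.map Prod.swap).map Prod.snd = σ.map Prod.fst := by
    rw [Measure.map_map measurable_snd measurable_swap]; rfl
  refine ⟨h1 ▸ h.snd_le, h2 ▸ h.fst_le, h1 ▸ h.snd_ge, h2 ▸ h.fst_ge, ?_⟩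
  refine (ae_map_iff measurable_swap.aemeasurable
    (measurableSet_le measurable_dist measurable_const)).2 (h.near.mono fun p hp => ?_)
  rwa [Prod.fst_swap, Prod.snd_swap, dist_comm]

lemma measure_farDiag_le (h : IsPartialMatching δ σ μ ν) {a : ℝ} (ha : 0 ≤ a) :
    ν (farDiag (a + 2 * δ)) ≤ μ (farDiag a) := by
  refine (h.snd_ge _ (isOpen_farDiag _).measurableSet (farDiag_anti (by linarith))).trans
    (le_trans ?_ (h.fst_le (farDiag a)))
  rw [Measure.map_apply measurable_snd (isOpen_farDiag _).measurableSet,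
    Measure.map_apply measurable_fst (isOpen_farDiag _).measurableSet]
  refine measure_mono_ae (h.near.mono fun p hp hp2 => ?_)
  have h1 : p.2.1.2 - p.2.1.1 > a + 2 * δ := hp2
  have h2 := height_le_add_dist p.2.1 p.1.1
  have h3 : dist p.2.1 p.1.1 ≤ δ := by rw [dist_comm]; exact hp
  show p.1.1.2 - p.1.1.1 > a
  linarith

lemma measure_le_of_isCompact (h : IsPartialMatching δ σ μ ν) {K : Set (Wbd × Wbd)}
    (hK : IsCompact K) : σ K ≤ μ (Prod.fst '' K) := by
  refine le_trans ?_ (h.fst_le _)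
  rw [Measure.map_apply measurable_fst (hK.image continuous_fst).measurableSet]
  exact measure_mono (subset_preimage_image _ _)

lemma isFiniteMeasureOnCompacts [IsFiniteMeasureOnCompacts μ] (h : IsPartialMatching δ σ μ ν) :
    IsFiniteMeasureOnCompacts σ :=
  ⟨fun _ hK => (h.measure_le_of_isCompact hK).trans_lt (hK.image continuous_fst).measure_lt_top⟩

lemma exists_isCompact_nearby {K : Set Wbd} (hK : IsCompact K) (hKδ : K ⊆ farDiag (2 * δ)) :
    ∃ L : Set Wbd, IsCompact L ∧ ∀ x ∈ K, ∀ y, dist x y ≤ δ → y ∈ L := by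
  have hK' : IsCompact (Subtype.val '' K) := hK.image continuous_subtype_val
  refine ⟨Subtype.val ⁻¹' Metric.cthickening δ (Subtype.val '' K), ?_, fun x hx y hxy => ?_⟩
  · refine (Topology.IsInducing.subtypeVal.isCompact_preimage_iff ?_).2 hK'.cthickening
    rw [Subtype.range_coe]
    intro y hy
    rcases lt_or_ge δ 0 with hδ | hδ
    · rw [Metric.cthickening_of_nonpos hδ.le, hK'.isClosed.closure_eq] at hy
      obtain ⟨x, -, rfl⟩ := hy
      exact x.2
    rw [hK'.cthickening_eq_biUnion_closedBall hδ] at hy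
    obtain ⟨_, ⟨x, hx, rfl⟩, hxy⟩ := mem_iUnion₂.1 hy
    have h1 : x.1.2 - x.1.1 > 2 * δ := hKδ hx
    have h2 := height_le_add_dist x.1 y
    have h3 : dist x.1 y ≤ δ := by rw [dist_comm]; exact hxy
    show y.1 < y.2
    linarith
  · exact Metric.mem_cthickening_of_dist_le _ x.1 _ _ (mem_image_of_mem _ hx)
      (by rw [dist_comm]; exact hxy)

end IsPartialMatching

/-- The function `(x, y) ↦ f x * g y`. -/
def ccMul (f g : C_c(Wbd, ℝ)) : C_c(Wbd × Wbd, ℝ) where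
  toFun p := f p.1 * g p.2
  continuous_toFun := (f.continuous.comp continuous_fst).mul (g.continuous.comp continuous_snd)
  hasCompactSupport' := by
    refine HasCompactSupport.intro (f.hasCompactSupport.isCompact.prod
      g.hasCompactSupport.isCompact) fun p hp => ?_
    by_cases h : p.1 ∈ tsupport f
    · rw [image_eq_zero_of_notMem_tsupport fun h' => hp ⟨h, h'⟩, mul_zero]
    · rw [image_eq_zero_of_notMem_tsupport h, zero_mul]

section Limit

variable {δ : ℝ} {l : Filter ℕ} [l.NeBot] {σs : ℕ → Measure (Wbd × Wbd)}
  {μs νs : ℕ → Measure Wbd} {σ : Measure (Wbd × Wbd)} {μ : Measure Wbd}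
  [∀ n, IsFiniteMeasureOnCompacts (μs n)]
  [IsFiniteMeasureOnCompacts σ]
  [IsFiniteMeasureOnCompacts μ]

lemma map_fst_le_of_vagueTendsto
    (hm : ∀ᶠ n in l, IsPartialMatching δ (σs n) (μs n) (νs n))
    (hσ : VagueTendsto σs l σ) (hμ : VagueTendsto μs l μ) : σ.map Prod.fst ≤ μ := by
  have key : ∀ L : Set Wbd, IsCompact L →
      (σ.restrict (univ ×ˢ L)).map Prod.fst ≤ μ := by
    intro L hL
    have hLm : MeasurableSet ((univ : Set Wbd) ×ˢ L) := MeasurableSet.univ.prod hL.measurableSet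
    have hfin : IsFiniteMeasureOnCompacts ((σ.restrict (univ ×ˢ L)).map Prod.fst) := by
      refine ⟨fun K hK => ?_⟩
      rw [Measure.map_apply measurable_fst hK.measurableSet, Measure.restrict_apply
        (measurable_fst hK.measurableSet)]
      refine lt_of_le_of_lt (measure_mono fun p hp => ?_) (hK.prod hL).measure_lt_top
      exact ⟨hp.1, hp.2.2⟩
    refine Measure.le_iff.2 fun A hA => measure_le_of_integral_le isOpen_univ
      (fun f hf _ => ?_) hA (subset_univ A)
    obtain ⟨g, g0, g1, gL, -⟩ :=
      exists_cc_one_on_compact_tsupport_subset hL isOpen_univ (subset_univ L)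
    rw [integral_map measurable_fst.aemeasurable (map_continuous f).aestronglyMeasurable,
      ← integral_indicator hLm]
    calc ∫ p, (univ ×ˢ L).indicator (fun p : Wbd × Wbd => f p.1) p ∂σ
        ≤ ∫ p, ccMul f g p ∂σ := by
          refine integral_mono_of_nonneg
            (Eventually.of_forall fun p => indicator_nonneg (fun p _ => hf p.1) p)
            (integrable_cc σ _) (Eventually.of_forall fun p => ?_)
          refine indicator_le' (fun p hp => ?_) (fun p _ => mul_nonneg (hf _) (g0 _)) p
          show f p.1 ≤ f p.1 * g p.2
          rw [gL _ hp.2, mul_one]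
      _ ≤ ∫ x, f x ∂μ := by
          refine le_of_tendsto_of_tendsto (hσ _) (hμ f) ?_
          filter_upwards [hm] with n hn
          have hint := (integrable_cc (μs n) f)
          have hint' := (hint.mono_measure hn.fst_le).comp_measurable measurable_fst
          calc ∫ p, ccMul f g p ∂(σs n) ≤ ∫ p, f p.1 ∂(σs n) :=
                integral_mono_of_nonneg
                  (Eventually.of_forall fun p => mul_nonneg (hf _) (g0 _)) hint'
                  (Eventually.of_forall fun p => mul_le_of_le_one_right (hf _) (g1 _))
            _ = ∫ x, f x ∂((σs n).map Prod.fst) :=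
                (integral_map measurable_fst.aemeasurable
                  (map_continuous f).aestronglyMeasurable).symm
            _ ≤ ∫ x, f x ∂(μs n) :=
                integral_mono_measure hn.fst_le (Eventually.of_forall hf) hint
  refine Measure.le_iff.2 fun A hA => ?_
  rw [Measure.map_apply measurable_fst hA]
  have hU : (Prod.fst ⁻¹' A : Set (Wbd × Wbd)) =
      ⋃ k, Prod.fst ⁻¹' A ∩ univ ×ˢ compactCovering Wbd k := by
    rw [← inter_iUnion, ← prod_iUnion, iUnion_compactCovering, univ_prod_univ, inter_univ]
  rw [hU, Monotone.measure_iUnion]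
  · refine iSup_le fun k => ?_
    have := key _ (isCompact_compactCovering Wbd k) A
    rwa [Measure.map_apply measurable_fst hA, Measure.restrict_apply (measurable_fst hA)] at this
  · exact fun i j hij => inter_subset_inter_right _
      (prod_mono le_rfl (compactCovering_subset Wbd hij))

lemma le_map_fst_of_vagueTendsto
    (hm : ∀ᶠ n in l, IsPartialMatching δ (σs n) (μs n) (νs n))
    (hσ : VagueTendsto σs l σ) (hμ : VagueTendsto μs l μ) {A : Set Wbd} (hA : MeasurableSet A)
    (hAδ : A ⊆ farDiag (2 * δ)) : μ A ≤ σ.map Prod.fst A := by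
  have hle := map_fst_le_of_vagueTendsto hm hσ hμ
  have hfin : IsFiniteMeasureOnCompacts (σ.map Prod.fst) :=
    ⟨fun K hK => (hle K).trans_lt hK.measure_lt_top⟩
  refine measure_le_of_integral_le (isOpen_farDiag (2 * δ)) (fun f hf hfδ => ?_) hA hAδ
  obtain ⟨L, hL, hLf⟩ :=
    IsPartialMatching.exists_isCompact_nearby f.hasCompactSupport.isCompact hfδ
  obtain ⟨g, g0, g1, gL, -⟩ :=
    exists_cc_one_on_compact_tsupport_subset hL isOpen_univ (subset_univ L)
  have hint := (integrable_cc (σ.map Prod.fst) f).comp_measurable measurable_fst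
  have hlim : ∫ x, f x ∂μ ≤ ∫ p, ccMul f g p ∂σ := by
    refine le_of_tendsto_of_tendsto (hμ f) (hσ _) ?_
    filter_upwards [hm] with n hn
    have hres : (μs n).restrict (farDiag (2 * δ)) =
        ((σs n).map Prod.fst).restrict (farDiag (2 * δ)) := by
      refine Measure.ext fun B hB => ?_
      rw [Measure.restrict_apply hB, Measure.restrict_apply hB]
      exact le_antisymm (hn.fst_ge _ (hB.inter (isOpen_farDiag _).measurableSet)
        inter_subset_right) (hn.fst_le _)
    have hz : ∀ x, x ∉ farDiag (2 * δ) → f x = 0 := fun x hx =>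
      image_eq_zero_of_notMem_tsupport fun h => hx (hfδ h)
    rw [← setIntegral_eq_integral_of_forall_compl_eq_zero hz, hres,
      setIntegral_eq_integral_of_forall_compl_eq_zero hz,
      integral_map measurable_fst.aemeasurable (map_continuous f).aestronglyMeasurable]
    refine le_of_eq (integral_congr_ae (hn.near.mono fun p hp => ?_))
    show f p.1 = f p.1 * g p.2
    by_cases h : p.1 ∈ tsupport f
    · rw [gL _ (hLf _ h _ hp), mul_one]
    · rw [image_eq_zero_of_notMem_tsupport h, zero_mul]
  refine hlim.trans ?_
  rw [integral_map measurable_fst.aemeasurable (map_continuous f).aestronglyMeasurable]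
  exact integral_mono_of_nonneg (Eventually.of_forall fun p => mul_nonneg (hf _) (g0 _)) hint
    (Eventually.of_forall fun p => mul_le_of_le_one_right (hf _) (g1 _))

end Limit

lemma VagueTendsto.map_swap {l : Filter ℕ} {σs : ℕ → Measure (Wbd × Wbd)}
    {σ : Measure (Wbd × Wbd)} (h : VagueTendsto σs l σ) :
    VagueTendsto (fun n => (σs n).map Prod.swap) l (σ.map Prod.swap) := by
  intro f
  have hswap : ∀ m : Measure (Wbd × Wbd),
      ∫ p, f p ∂(m.map Prod.swap) = ∫ p, f p.swap ∂m := fun m =>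
    integral_map measurable_swap.aemeasurable (map_continuous f).aestronglyMeasurable
  simp only [hswap]
  exact h ⟨⟨fun p => f p.swap, f.continuous.comp continuous_swap⟩,
    f.hasCompactSupport.comp_homeomorph (Homeomorph.prodComm Wbd Wbd)⟩

/-- Vague limits of partial matchings are partial matchings of the vague limits. -/
lemma IsPartialMatching.of_vagueTendsto {δ : ℝ} {l : Filter ℕ} [l.NeBot]
    {σs : ℕ → Measure (Wbd × Wbd)} {μs νs : ℕ → Measure Wbd} {σ : Measure (Wbd × Wbd)}
    {μ ν : Measure Wbd} [∀ n, IsFiniteMeasureOnCompacts (σs n)]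
    [∀ n, IsFiniteMeasureOnCompacts (μs n)] [∀ n, IsFiniteMeasureOnCompacts (νs n)]
    [IsFiniteMeasureOnCompacts σ] [IsFiniteMeasureOnCompacts μ] [IsFiniteMeasureOnCompacts ν]
    (hm : ∀ᶠ n in l, IsPartialMatching δ (σs n) (μs n) (νs n))
    (hσ : VagueTendsto σs l σ) (hμ : VagueTendsto μs l μ) (hν : VagueTendsto νs l ν) :
    IsPartialMatching δ σ μ ν := by
  have hfin : IsFiniteMeasureOnCompacts (σ.map Prod.swap) := by
    refine ⟨fun K hK => ?_⟩
    rw [Measure.map_apply measurable_swap hK.measurableSet]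
    exact ((Homeomorph.prodComm Wbd Wbd).isCompact_preimage.2 hK).measure_lt_top
  have hm' := hm.mono fun n hn => hn.swap
  have hmap : (σ.map Prod.swap).map Prod.fst = σ.map Prod.snd := by
    rw [Measure.map_map measurable_fst measurable_swap]; rfl
  refine ⟨map_fst_le_of_vagueTendsto hm hσ hμ, ?_,
    fun A hA hAδ => le_map_fst_of_vagueTendsto hm hσ hμ hA hAδ, fun A hA hAδ => ?_, ?_⟩
  · rw [← hmap]
    exact map_fst_le_of_vagueTendsto hm' hσ.map_swap hν
  · rw [← hmap]
    exact le_map_fst_of_vagueTendsto hm' hσ.map_swap hν hA hAδ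
  · have hO : IsOpen {p : Wbd × Wbd | δ < dist p.1 p.2} := isOpen_lt continuous_const continuous_dist
    have h0 : σ {p : Wbd × Wbd | δ < dist p.1 p.2} ≤ 0 :=
      hσ.measure_open_le hO (hm.mono fun n hn => le_of_eq (by simpa [ae_iff] using hn.near))
    simpa [ae_iff] using h0

section Couplings

lemma measurableEmbedding_val_prod :
    MeasurableEmbedding (Prod.map Subtype.val Subtype.val : Wbd × Wbd → P2 × P2) :=
  measurableEmbedding_val.prodMap measurableEmbedding_val

lemma dW_comm (x y : P2) : dW x y = dW y x := by
  unfold dW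
  rw [dist_comm, add_comm]

lemma dist_le_of_dW_le {δ : ℝ} {x y : P2} (hx : x ∈ Weps (2 * δ)) (h : dW x y ≤ δ) :
    dist x y ≤ δ ∧ y ∈ Wbd := by
  have hx' : x.2 - x.1 > 2 * δ := hx
  have hd : dist x y ≤ δ := by
    rcases min_le_iff.1 h with h | h
    · exact h
    · rw [distDiag_eq, distDiag_eq] at h
      linarith [le_abs_self (x.2 - x.1), abs_nonneg (y.2 - y.1)]
  refine ⟨hd, ?_⟩
  have := height_le_add_dist x y
  show y.1 < y.2
  linarith

/-- A coupling of cost less than `δ` induces a partial matching. -/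
lemma exists_isPartialMatching_of_OT_lt {μ ν : Measure Wbd} {δ : ℝ}
    (h : OT (μ.map Subtype.val) (ν.map Subtype.val) < ENNReal.ofReal δ) :
    ∃ σ : Measure (Wbd × Wbd), IsPartialMatching δ σ μ ν := by
  obtain ⟨π, h⟩ := iInf_lt_iff.1 h
  obtain ⟨⟨hrad, hfst, hsnd⟩, hcost⟩ := iInf_lt_iff.1 h
  have hδ : 0 < δ := ENNReal.ofReal_pos.1 (pos_of_gt hcost)
  have hd : ∀ᵐ p ∂π, dW p.1 p.2 ≤ δ := by
    filter_upwards [Measure.support_mem_ae (μ := π)] with p hp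
    rw [← msupport_eq_support] at hp
    have h1 : ENNReal.ofReal (dW p.1 p.2) ≤ costInf π :=
      le_iSup₂_of_le (f := fun (p : P2 × P2) (_ : p ∈ msupport π) =>
        ENNReal.ofReal (dW p.1 p.2)) p hp le_rfl
    exact (ENNReal.ofReal_le_ofReal_iff hδ.le).1 (h1.trans hcost.le)
  let e : Wbd × Wbd → P2 × P2 := Prod.map Subtype.val Subtype.val
  let D : Set (Wbd × Wbd) := {p | dist p.1 p.2 ≤ δ}
  have hD : MeasurableSet D := measurableSet_le measurable_dist measurable_const
  have happ : ∀ B : Set (Wbd × Wbd), MeasurableSet B →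
      (π.comap e).restrict D B = π (e '' (B ∩ D)) := fun B hB => by
    rw [Measure.restrict_apply hB, measurableEmbedding_val_prod.comap_apply]
  have himg : ∀ (m : Measure Wbd) (A : Set Wbd), m.map Subtype.val (Subtype.val '' A) = m A :=
    fun m A => by
      rw [measurableEmbedding_val.map_apply, preimage_image_eq _ Subtype.val_injective]
  have hsub : ∀ A : Set Wbd, Subtype.val '' A ⊆ Wbd := fun A => by
    rintro _ ⟨x, -, rfl⟩
    exact x.2
  have himgm : ∀ A : Set Wbd, MeasurableSet A → MeasurableSet (Subtype.val '' A) :=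
    fun A hA => measurableEmbedding_val.measurableSet_image.2 hA
  refine ⟨(π.comap e).restrict D, Measure.le_iff.2 fun A hA => ?_, Measure.le_iff.2 fun A hA => ?_,
    fun A hA hAδ => ?_, fun A hA hAδ => ?_, ae_restrict_mem hD⟩
  · rw [Measure.map_apply measurable_fst hA, happ _ (measurable_fst hA), ← himg μ,
      ← hfst _ (hsub A) (himgm A hA)]
    refine measure_mono ?_
    rintro _ ⟨p, hp, rfl⟩
    exact ⟨⟨p.1, hp.1, rfl⟩, subset_closure p.2.2⟩
  · rw [Measure.map_apply measurable_snd hA, happ _ (measurable_snd hA), ← himg ν,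
      ← hsnd _ (hsub A) (himgm A hA)]
    refine measure_mono ?_
    rintro _ ⟨p, hp, rfl⟩
    exact ⟨subset_closure p.1.2, ⟨p.2, hp.1, rfl⟩⟩
  · rw [Measure.map_apply measurable_fst hA, happ _ (measurable_fst hA), ← himg μ,
      ← hfst _ (hsub A) (himgm A hA)]
    refine measure_mono_ae (hd.mono ?_)
    rintro ⟨_, y⟩ hp ⟨⟨x, hx, rfl⟩, -⟩
    obtain ⟨h1, h2⟩ := dist_le_of_dW_le (hAδ hx) hp
    exact ⟨(x, ⟨y, h2⟩), ⟨hx, h1⟩, rfl⟩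
  · rw [Measure.map_apply measurable_snd hA, happ _ (measurable_snd hA), ← himg ν,
      ← hsnd _ (hsub A) (himgm A hA)]
    refine measure_mono_ae (hd.mono ?_)
    rintro ⟨x, _⟩ hp ⟨-, ⟨y, hy, rfl⟩⟩
    rw [dW_comm] at hp
    obtain ⟨h1, h2⟩ := dist_le_of_dW_le (hAδ hy) hp
    rw [dist_comm] at h1
    exact ⟨(⟨x, h2⟩, y), ⟨hy, h1⟩, rfl⟩

/-- A point of the diagonal that escapes to infinity as `x` approaches the diagonal. -/
def escape (x : Wbd) : P2 := ((x.1.2 - x.1.1)⁻¹, (x.1.2 - x.1.1)⁻¹)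

lemma measurable_escape : Measurable escape := by
  unfold escape
  fun_prop

lemma escape_notMem_Wbd (x : Wbd) : escape x ∉ Wbd := fun h => lt_irrefl (x.1.2 - x.1.1)⁻¹ h

lemma escape_mem_Wcl (x : Wbd) : escape x ∈ Wcl := by
  rw [Wcl_eq]
  exact le_refl (x.1.2 - x.1.1)⁻¹

lemma dW_escape_le {δ : ℝ} {x : Wbd} (hx : x ∉ farDiag (2 * δ)) : dW x.1 (escape x) ≤ δ := by
  refine (min_le_right _ _).trans ?_
  have hx' : ¬ x.1.2 - x.1.1 > 2 * δ := hx
  have hpos : 0 < x.1.2 - x.1.1 := sub_pos.2 x.2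
  rw [distDiag_eq, distDiag_eq, abs_of_pos hpos]
  simp only [escape, sub_self, abs_zero]
  linarith

lemma exists_preimage_escape_subset {B : Set P2} (hB : IsCompact B) :
    ∃ c : ℝ, 0 < c ∧ escape ⁻¹' B ⊆ farDiag c := by
  obtain ⟨R, hR0, hR⟩ := hB.isBounded.exists_pos_norm_lt
  refine ⟨R⁻¹, inv_pos.2 hR0, fun x hx => ?_⟩
  have hpos : 0 < x.1.2 - x.1.1 := sub_pos.2 x.2
  have h1 : (x.1.2 - x.1.1)⁻¹ < R :=
    (le_abs_self _).trans_lt ((norm_fst_le (escape x)).trans_lt (hR _ hx))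
  exact inv_lt_of_inv_lt₀ hpos h1

lemma exists_residual {α : Type*} [MeasurableSpace α] {s μ : Measure α} [IsFiniteMeasure s]
    (h : s ≤ μ) {T : Set α} (hT : MeasurableSet T) (hge : μ T ≤ s T) :
    ∃ ρ : Measure α, ρ + s = μ ∧ ρ T = 0 :=
  ⟨μ - s, Measure.sub_add_cancel_of_le h, by
    rw [Measure.sub_apply hT h, tsub_eq_zero_of_le hge]⟩

/-- A partial matching can be completed to a coupling by sending unmatched mass to the
diagonal. -/
lemma IsPartialMatching.OT_le {μ ν : Measure Wbd} {δ : ℝ} (hδ : 0 < δ)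
    {σ : Measure (Wbd × Wbd)} (h : IsPartialMatching δ σ μ ν)
    (hμ : ∀ ε : ℝ, 0 < ε → μ (farDiag ε) < ⊤) (hν : ∀ ε : ℝ, 0 < ε → ν (farDiag ε) < ⊤) :
    OT (μ.map Subtype.val) (ν.map Subtype.val) ≤ ENNReal.ofReal δ := by
  let T := farDiag (2 * δ)
  have hT : MeasurableSet T := (isOpen_farDiag _).measurableSet
  let Q : Set (Wbd × Wbd) := Prod.fst ⁻¹' T ∪ Prod.snd ⁻¹' T
  let s := σ.restrict Q
  have hsfin : IsFiniteMeasure s := by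
    refine ⟨?_⟩
    rw [Measure.restrict_apply_univ]
    refine (measure_union_le _ _).trans_lt (ENNReal.add_lt_top.2 ⟨?_, ?_⟩)
    · rw [← Measure.map_apply measurable_fst hT]
      exact (h.fst_le T).trans_lt (hμ _ (by linarith))
    · rw [← Measure.map_apply measurable_snd hT]
      exact (h.snd_le T).trans_lt (hν _ (by linarith))
  have hs1 : s.map Prod.fst ≤ μ :=
    (Measure.map_mono Measure.restrict_le_self measurable_fst).trans h.fst_le
  have hs2 : s.map Prod.snd ≤ ν :=
    (Measure.map_mono Measure.restrict_le_self measurable_snd).trans h.snd_le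
  have hT1 : μ T ≤ s.map Prod.fst T := by
    refine (h.fst_ge T hT le_rfl).trans_eq ?_
    rw [Measure.map_apply measurable_fst hT, Measure.map_apply measurable_fst hT,
      Measure.restrict_apply (measurable_fst hT), inter_eq_left.2 subset_union_left]
  have hT2 : ν T ≤ s.map Prod.snd T := by
    refine (h.snd_ge T hT le_rfl).trans_eq ?_
    rw [Measure.map_apply measurable_snd hT, Measure.map_apply measurable_snd hT,
      Measure.restrict_apply (measurable_snd hT), inter_eq_left.2 subset_union_right]
  obtain ⟨ρ₁, hρ₁, hρ₁T⟩ := exists_residual hs1 hT hT1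
  obtain ⟨ρ₂, hρ₂, hρ₂T⟩ := exists_residual hs2 hT hT2
  let e : Wbd × Wbd → P2 × P2 := Prod.map Subtype.val Subtype.val
  let g₁ : Wbd → P2 × P2 := fun x => (x.1, escape x)
  let g₂ : Wbd → P2 × P2 := fun y => (escape y, y.1)
  have he : Measurable e := measurableEmbedding_val_prod.measurable
  have hg₁ : Measurable g₁ := measurable_subtype_coe.prodMk measurable_escape
  have hg₂ : Measurable g₂ := measurable_escape.prodMk measurable_subtype_coe
  let π : Measure (P2 × P2) := s.map e + ρ₁.map g₁ + ρ₂.map g₂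
  have happ : ∀ B, MeasurableSet B → π B = s (e ⁻¹' B) + ρ₁ (g₁ ⁻¹' B) + ρ₂ (g₂ ⁻¹' B) :=
    fun B hB => by
      simp only [π, Measure.add_apply, Measure.map_apply he hB, Measure.map_apply hg₁ hB,
        Measure.map_apply hg₂ hB]
  have hWcl : IsClosed Wcl := isClosed_closure
  have hF : IsClosed {p : P2 × P2 | dW p.1 p.2 ≤ δ} := isClosed_le continuous_dW continuous_const
  have hπS : π (Wcl ×ˢ Wcl)ᶜ = 0 := by
    rw [happ _ (hWcl.prod hWcl).measurableSet.compl]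
    have h1 : e ⁻¹' (Wcl ×ˢ Wcl)ᶜ = ∅ := eq_empty_of_forall_notMem fun p hp =>
      hp ⟨subset_closure p.1.2, subset_closure p.2.2⟩
    have h2 : g₁ ⁻¹' (Wcl ×ˢ Wcl)ᶜ = ∅ := eq_empty_of_forall_notMem fun x hx =>
      hx ⟨subset_closure x.2, escape_mem_Wcl x⟩
    have h3 : g₂ ⁻¹' (Wcl ×ˢ Wcl)ᶜ = ∅ := eq_empty_of_forall_notMem fun x hx =>
      hx ⟨escape_mem_Wcl x, subset_closure x.2⟩
    simp [h1, h2, h3]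
  have hπF : π {p : P2 × P2 | dW p.1 p.2 ≤ δ}ᶜ = 0 := by
    rw [happ _ hF.measurableSet.compl]
    have h1 : s (e ⁻¹' {p : P2 × P2 | dW p.1 p.2 ≤ δ}ᶜ) = 0 := by
      refine mem_ae_iff.1 ((ae_restrict_of_ae h.near).mono fun p hp => ?_)
      exact (min_le_left _ _).trans hp
    have h2 : ρ₁ (g₁ ⁻¹' {p : P2 × P2 | dW p.1 p.2 ≤ δ}ᶜ) = 0 :=
      measure_mono_null (fun x hx => by_contra fun hxT => hx (dW_escape_le hxT)) hρ₁T
    have h3 : ρ₂ (g₂ ⁻¹' {p : P2 × P2 | dW p.1 p.2 ≤ δ}ᶜ) = 0 := by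
      refine measure_mono_null (fun x hx => by_contra fun hxT => hx ?_) hρ₂T
      show dW (escape x) x.1 ≤ δ
      rw [dW_comm]
      exact dW_escape_le hxT
    rw [h1, h2, h3, add_zero, add_zero]
  have hπK : ∀ K : Set (P2 × P2), IsCompact K → π K < ⊤ := by
    intro K hK
    rw [happ K hK.measurableSet]
    obtain ⟨c₁, hc₁, hsub₁⟩ := exists_preimage_escape_subset (hK.image continuous_snd)
    obtain ⟨c₂, hc₂, hsub₂⟩ := exists_preimage_escape_subset (hK.image continuous_fst)
    refine ENNReal.add_lt_top.2 ⟨ENNReal.add_lt_top.2 ⟨measure_lt_top _ _, ?_⟩, ?_⟩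
    · refine lt_of_le_of_lt ?_ (hμ c₁ hc₁)
      exact (measure_mono fun x hx => hsub₁ ⟨g₁ x, hx, rfl⟩).trans
        (((Measure.le_add_right le_rfl).trans_eq hρ₁ : ρ₁ ≤ μ) _)
    · refine lt_of_le_of_lt ?_ (hν c₂ hc₂)
      exact (measure_mono fun x hx => hsub₂ ⟨g₂ x, hx, rfl⟩).trans
        (((Measure.le_add_right le_rfl).trans_eq hρ₂ : ρ₂ ≤ ν) _)
  have hcoup : IsCoupling π (μ.map Subtype.val) (ν.map Subtype.val) := by
    refine ⟨radonOn_of_isClosed (hWcl.prod hWcl) π hπS hπK, fun A hAW hA => ?_,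
      fun B hBW hB => ?_⟩
    · rw [happ _ (hA.prod hWcl.measurableSet), measurableEmbedding_val.map_apply, ← hρ₁,
        Measure.add_apply, Measure.map_apply measurable_fst (measurable_subtype_coe hA)]
      have h1 : e ⁻¹' (A ×ˢ Wcl) = Prod.fst ⁻¹' (Subtype.val ⁻¹' A) :=
        Set.ext fun p => ⟨fun hp => hp.1, fun hp => ⟨hp, subset_closure p.2.2⟩⟩
      have h2 : g₁ ⁻¹' (A ×ˢ Wcl) = Subtype.val ⁻¹' A :=
        Set.ext fun x => ⟨fun hx => hx.1, fun hx => ⟨hx, escape_mem_Wcl x⟩⟩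
      have h3 : g₂ ⁻¹' (A ×ˢ Wcl) = ∅ :=
        eq_empty_of_forall_notMem fun x hx => escape_notMem_Wbd x (hAW hx.1)
      rw [h1, h2, h3, measure_empty, add_zero, add_comm]
    · rw [happ _ (hWcl.measurableSet.prod hB), measurableEmbedding_val.map_apply, ← hρ₂,
        Measure.add_apply, Measure.map_apply measurable_snd (measurable_subtype_coe hB)]
      have h1 : e ⁻¹' (Wcl ×ˢ B) = Prod.snd ⁻¹' (Subtype.val ⁻¹' B) :=
        Set.ext fun p => ⟨fun hp => hp.2, fun hp => ⟨subset_closure p.1.2, hp⟩⟩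
      have h2 : g₁ ⁻¹' (Wcl ×ˢ B) = ∅ :=
        eq_empty_of_forall_notMem fun x hx => escape_notMem_Wbd x (hBW hx.2)
      have h3 : g₂ ⁻¹' (Wcl ×ˢ B) = Subtype.val ⁻¹' B :=
        Set.ext fun x => ⟨fun hx => hx.2, fun hx => ⟨escape_mem_Wcl x, hx⟩⟩
      rw [h1, h2, h3, measure_empty, add_zero, add_comm]
  refine iInf₂_le_of_le π hcoup (iSup₂_le fun p hp => ENNReal.ofReal_le_ofReal ?_)
  rw [msupport_eq_support] at hp
  exact Measure.support_subset_of_isClosed hF (mem_ae_iff.2 hπF) hp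

end Couplings

/-- Truncation near the diagonal is a partial matching along the identity. -/
lemma isPartialMatching_restrict (m : Measure Wbd) {ε : ℝ} (hε : 0 < ε) :
    IsPartialMatching ε ((m.restrict (farDiag ε)).map fun x => (x, x)) m
      (m.restrict (farDiag ε)) := by
  have hd : Measurable fun x : Wbd => (x, x) := measurable_id.prodMk measurable_id
  have h1 : ((m.restrict (farDiag ε)).map fun x => (x, x)).map Prod.fst =
      m.restrict (farDiag ε) := by
    rw [Measure.map_map measurable_fst hd]
    exact Measure.map_id
  have h2 : ((m.restrict (farDiag ε)).map fun x => (x, x)).map Prod.snd =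
      m.restrict (farDiag ε) := by
    rw [Measure.map_map measurable_snd hd]
    exact Measure.map_id
  refine ⟨h1.le.trans Measure.restrict_le_self, h2.le, fun A hA hAε => ?_, fun A _ _ => by rw [h2], ?_⟩
  · rw [h1, Measure.restrict_apply hA,
      inter_eq_left.2 (hAε.trans (farDiag_anti (by linarith)))]
  · refine (ae_map_iff hd.aemeasurable
      (measurableSet_le measurable_dist measurable_const)).2 (Eventually.of_forall fun x => ?_)
    rw [dist_self]
    exact hε.le

lemma restrict_Weps_mem_Mfin_and_OT_le {μ : Measure P2} (hμ : μ ∈ Mf) {ε : ℝ} (hε : 0 < ε) :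
    μ.restrict (Weps ε) ∈ Mfin ∧ OT μ (μ.restrict (Weps ε)) ≤ ENNReal.ofReal ε := by
  obtain ⟨m, rfl, hfin, R, hR⟩ := exists_eq_map_val hμ
  have hres : (m.map Subtype.val).restrict (Weps ε) =
      (m.restrict (farDiag ε)).map Subtype.val :=
    Measure.restrict_map measurable_subtype_coe (isOpen_Weps ε).measurableSet
  have hfin' : ∀ η : ℝ, 0 < η → m.restrict (farDiag ε) (farDiag η) < ⊤ := fun η hη =>
    (Measure.restrict_apply_le _ _).trans_lt (hfin η hη)
  rw [hres]
  refine ⟨⟨(map_val_mem_Mf hfin'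
    (le_antisymm ((Measure.restrict_apply_le _ _).trans hR.le) zero_le)).1, ?_⟩,
    (isPartialMatching_restrict m hε).OT_le hε hfin hfin'⟩
  rw [measurableEmbedding_val.map_apply]
  refine (measure_mono (subset_univ _)).trans_lt ?_
  rw [Measure.restrict_apply_univ]
  exact hfin ε hε

lemma Mfin_subset_Mf : Mfin ⊆ Mf := by
  refine fun μ hμ => ⟨hμ.1, fun ε hε => lt_of_le_of_lt (measure_mono fun p hp => ?_) hμ.2⟩
  have hp' : p.2 - p.1 > ε := hp
  show p.1 < p.2
  linarith

/-- Cauchy sequences of off-diagonally finite measures converge. -/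
lemma exists_limit_of_cauchy {u : ℕ → Measure P2} (hu : ∀ n, u n ∈ Mf)
    (hC : ∀ ε : ℝ, 0 < ε →
      ∃ N : ℕ, ∀ m ≥ N, ∀ n ≥ N, OT (u m) (u n) < ENNReal.ofReal ε) :
    ∃ μ ∈ Mf, Tendsto (fun n => OT (u n) μ) atTop (𝓝 0) := by
  choose v hvu hvfin hvR using fun n => exists_eq_map_val (hu n)
  have hvK : ∀ n, IsFiniteMeasureOnCompacts (v n) := fun n =>
    isFiniteMeasureOnCompacts_of_farDiag (hvfin n)
  have hmatch : ∀ ε : ℝ, 0 < ε → ∃ N : ℕ, ∀ m ≥ N, ∀ n ≥ N,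
      ∃ σ, IsPartialMatching ε σ (v m) (v n) := by
    intro ε hε
    obtain ⟨N, hN⟩ := hC ε hε
    refine ⟨N, fun m hm n hn => exists_isPartialMatching_of_OT_lt ?_⟩
    rw [hvu, hvu]
    exact hN m hm n hn
  let l : Ultrafilter ℕ := Ultrafilter.of atTop
  have hl : ∀ N : ℕ, ∀ᶠ n in (l : Filter ℕ), N ≤ n := fun N =>
    Ultrafilter.of_le atTop (eventually_ge_atTop N)
  have hbound : ∀ ε : ℝ, 0 < ε → ∃ C : ℝ≥0∞, C < ⊤ ∧
      ∀ᶠ n in (l : Filter ℕ), v n (farDiag ε) ≤ C := by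
    intro ε hε
    obtain ⟨N, hN⟩ := hmatch (ε / 4) (by linarith)
    refine ⟨v N (farDiag (ε / 2)), hvfin N _ (half_pos hε), (hl N).mono fun n hn => ?_⟩
    obtain ⟨σ, hσ⟩ := hN N le_rfl n hn
    have := hσ.measure_farDiag_le (half_pos hε).le
    rwa [show ε / 2 + 2 * (ε / 4) = ε by ring] at this
  obtain ⟨m, hmK, hvm⟩ := exists_vagueTendsto l v fun K hK => by
    obtain ⟨ε, hε, hKε⟩ := exists_subset_farDiag hK
    obtain ⟨C, hC, hev⟩ := hbound ε hε
    exact ⟨C, hC, hev.mono fun n hn => (measure_mono hKε).trans hn⟩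
  have hmfin : ∀ ε : ℝ, 0 < ε → m (farDiag ε) < ⊤ := fun ε hε => by
    obtain ⟨C, hC, hev⟩ := hbound ε hε
    exact (hvm.measure_open_le (isOpen_farDiag ε) hev).trans_lt hC
  have hmR : ∃ R : ℝ, m (farDiag R) = 0 := by
    obtain ⟨N, hN⟩ := hmatch 1 one_pos
    obtain ⟨R, hR⟩ := hvR N
    refine ⟨|R| + 2 * 1, le_antisymm (hvm.measure_open_le (isOpen_farDiag _) ?_) zero_le⟩
    refine (hl N).mono fun n hn => ?_
    obtain ⟨σ, hσ⟩ := hN N le_rfl n hn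
    exact (hσ.measure_farDiag_le (abs_nonneg R)).trans
      ((measure_mono (farDiag_anti (le_abs_self R))).trans hR.le)
  obtain ⟨R, hR⟩ := hmR
  refine ⟨m.map Subtype.val, map_val_mem_Mf hmfin hR, ENNReal.tendsto_atTop_zero.2 fun η hη => ?_⟩
  obtain ⟨δ, hδ, hδη⟩ : ∃ δ : ℝ, 0 < δ ∧ ENNReal.ofReal δ ≤ η := by
    obtain ⟨r, hr0, hr⟩ := ENNReal.lt_iff_exists_nnreal_btwn.1 hη
    exact ⟨r, by exact_mod_cast hr0, by rw [ENNReal.ofReal_coe_nnreal]; exact hr.le⟩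
  obtain ⟨N, hN⟩ := hmatch δ hδ
  refine ⟨N, fun k hk => le_trans ?_ hδη⟩
  have hσ : ∀ n, ∃ σ : Measure (Wbd × Wbd), IsFiniteMeasureOnCompacts σ ∧
      (∀ K, IsCompact K → σ K ≤ v k (Prod.fst '' K)) ∧
      (N ≤ n → IsPartialMatching δ σ (v k) (v n)) := fun n => by
    by_cases hn : N ≤ n
    · obtain ⟨σ, hσ⟩ := hN k hk n hn
      exact ⟨σ, hσ.isFiniteMeasureOnCompacts, fun K hK => hσ.measure_le_of_isCompact hK,
        fun _ => hσ⟩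
    · exact ⟨0, inferInstance, fun K _ => by simp, fun h => absurd h hn⟩
  choose σs hσfin hσK hσm using hσ
  obtain ⟨σ, hσfin', hσlim⟩ := exists_vagueTendsto l σs fun K hK =>
    ⟨_, (hK.image continuous_fst).measure_lt_top, Eventually.of_forall fun n => hσK n K hK⟩
  have hlim : IsPartialMatching δ σ (v k) m :=
    IsPartialMatching.of_vagueTendsto (μs := fun _ => v k) ((hl N).mono fun n hn => hσm n hn)
      hσlim (fun _ => tendsto_const_nhds) hvm
  rw [← hvu k]
  exact hlim.OT_le hδ (hvfin k) hmfin

/-- For `μ ∈ M_f^∞` and `ε > 0`, the finite measure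
`μ_ε(E) = μ(E ∩ W_ε)` satisfies `OT_∞(μ, μ_ε) ≤ ε`. Consequently `M_fin^∞` is dense in
`(M_f^∞, OT_∞)`, and `M_f^∞` is the Cauchy completion of `(M_fin^∞, OT_∞)`:
`M_fin^∞ ⊆ M_f^∞` is dense and `M_f^∞` is complete. -/
theorem Mf_completion_of_Mfin :
    (∀ μ ∈ Mf, ∀ ε : ℝ, 0 < ε →
      μ.restrict (Weps ε) ∈ Mfin ∧ OT μ (μ.restrict (Weps ε)) ≤ ENNReal.ofReal ε) ∧
    (∀ μ ∈ Mf, ∀ ε : ℝ, 0 < ε → ∃ ν ∈ Mfin, OT μ ν < ENNReal.ofReal ε) ∧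
    Mfin ⊆ Mf ∧
    (∀ u : ℕ → Measure P2, (∀ n, u n ∈ Mf) →
      (∀ ε : ℝ, 0 < ε → ∃ N : ℕ, ∀ m ≥ N, ∀ n ≥ N, OT (u m) (u n) < ENNReal.ofReal ε) →
      ∃ μ ∈ Mf, Tendsto (fun n => OT (u n) μ) atTop (𝓝 0)) := by
  refine ⟨fun μ hμ ε hε => restrict_Weps_mem_Mfin_and_OT_le hμ hε, fun μ hμ ε hε => ?_,
    Mfin_subset_Mf, fun u hu hC => exists_limit_of_cauchy hu hC⟩
  obtain ⟨h1, h2⟩ := restrict_Weps_mem_Mfin_and_OT_le hμ (half_pos hε)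
  exact ⟨_, h1, h2.trans_lt ((ENNReal.ofReal_lt_ofReal_iff hε).2 (half_lt_self hε))⟩
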